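/- Let σ > 0, h > 0 and x ∈ ℝ, and let Y be a real random variable with distribution function F_Y and bounded density f_Y. Then the second moment of the integrated Laplace deconvoluting kernel satisfies the integration-by-parts identity ∫_ℝ (𝒦^ε_h((x−y)/h))² f_Y(y) dy = 2 ∫_ℝ K^ε_h(z) 𝒦^ε_h(−z) F_Y(x + zh) dz. -/

import Mathlib

/-!
Since `𝒦' = K`, `K` is even and `𝒦(-∞) = 0`, the function `z ↦ 𝒦(-z)²` has derivative
`-2 K(z) 𝒦(-z)` and vanishes at `+∞`, so `𝒦((x - y)/h)² = ∫_{z > (y - x)/h} 2 K(z) 𝒦(-z) dz`.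
Inserting this in the left-hand side and exchanging the two integrals gives the claim, because
`z > (y - x)/h` is the same as `y < x + z h` and `∫_{y < x + z h} f_Y(y) dy = F_Y(x + z h)`. Fubini's
theorem replaces integration by parts, so no continuity of the density `f_Y` is needed; it applies
because `K` is integrable and `𝒦` is bounded.
-/

open MeasureTheory Filter

/-- The standard normal distribution function `Φ(u) = (2π)^{-1/2} ∫_{-∞}^u e^{-t²/2} dt`. -/
noncomputable def stdNormalCDF (u : ℝ) : ℝ :=
  (Real.sqrt (2 * Real.pi))⁻¹ * ∫ t in Set.Iio u, Real.exp (-t ^ 2 / 2)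

/-- The Laplace deconvoluting kernel `K^ε_h(u) = (2π)^{-1/2} e^{-u²/2} (1 + (σ²/h²)(1-u²))`. -/
noncomputable def laplaceKepsDens (σ h u : ℝ) : ℝ :=
  (Real.sqrt (2 * Real.pi))⁻¹ * Real.exp (-u ^ 2 / 2) * (1 + σ ^ 2 / h ^ 2 * (1 - u ^ 2))

/-- The integrated Laplace deconvoluting kernel
`𝒦^ε_h(u) = Φ(u) + (2π)^{-1/2} (σ²/h²) u e^{-u²/2}`. -/
noncomputable def laplaceKeps (σ h u : ℝ) : ℝ :=
  stdNormalCDF u + (Real.sqrt (2 * Real.pi))⁻¹ * (σ ^ 2 / h ^ 2) * u * Real.exp (-u ^ 2 / 2)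

lemma integrable_exp_neg_sq_half : Integrable (fun t : ℝ => Real.exp (-t ^ 2 / 2)) := by
  have h := integrable_exp_neg_mul_sq (b := 1 / 2) (by norm_num)
  refine h.congr (Eventually.of_forall fun t => ?_)
  simp only
  congr 1
  ring

lemma stdNormalCDF_eq (u : ℝ) :
    stdNormalCDF u = (Real.sqrt (2 * Real.pi))⁻¹ *
      ((∫ t in Set.Iic (0 : ℝ), Real.exp (-t ^ 2 / 2)) + ∫ t in (0 : ℝ)..u, Real.exp (-t ^ 2 / 2)) := by
  unfold stdNormalCDF
  rw [← integral_Iic_eq_integral_Iio,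
    ← intervalIntegral.integral_Iic_sub_Iic integrable_exp_neg_sq_half.integrableOn
      integrable_exp_neg_sq_half.integrableOn]
  ring

lemma hasDerivAt_stdNormalCDF (u : ℝ) :
    HasDerivAt stdNormalCDF ((Real.sqrt (2 * Real.pi))⁻¹ * Real.exp (-u ^ 2 / 2)) u := by
  have hc : Continuous (fun t : ℝ => Real.exp (-t ^ 2 / 2)) := by fun_prop
  have h := ((hc.integral_hasStrictDerivAt 0 u).hasDerivAt.const_add
    (∫ t in Set.Iic (0 : ℝ), Real.exp (-t ^ 2 / 2))).const_mul (Real.sqrt (2 * Real.pi))⁻¹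
  exact h.congr_of_eventuallyEq (Eventually.of_forall stdNormalCDF_eq)

lemma tendsto_stdNormalCDF_atBot : Tendsto stdNormalCDF atBot (nhds 0) := by
  have h := intervalIntegral_tendsto_integral_Iic (0 : ℝ)
    integrable_exp_neg_sq_half.integrableOn (tendsto_id (α := ℝ) (x := atBot))
  have h2 := (h.const_sub (∫ t in Set.Iic (0 : ℝ), Real.exp (-t ^ 2 / 2))).const_mul
    (Real.sqrt (2 * Real.pi))⁻¹
  rw [sub_self, mul_zero] at h2
  refine h2.congr fun u => ?_
  rw [stdNormalCDF_eq, intervalIntegral.integral_symm]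
  simp only [id, sub_neg_eq_add]

lemma hasDerivAt_laplaceKeps (σ h u : ℝ) :
    HasDerivAt (laplaceKeps σ h) (laplaceKepsDens σ h u) u := by
  have h1 : HasDerivAt (fun u : ℝ => Real.exp (-u ^ 2 / 2)) (Real.exp (-u ^ 2 / 2) * (-u)) u := by
    have := (((hasDerivAt_id u).pow 2).neg.div_const 2).exp
    refine HasDerivAt.congr_deriv this ?_
    simp
    ring
  have h2 := (((hasDerivAt_id u).const_mul
    ((Real.sqrt (2 * Real.pi))⁻¹ * (σ ^ 2 / h ^ 2))).mul h1)
  have h3 := (hasDerivAt_stdNormalCDF u).add h2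
  refine HasDerivAt.congr_deriv h3 ?_
  simp only [laplaceKepsDens, id]
  ring

lemma tendsto_laplaceKeps_atBot (σ h : ℝ) : Tendsto (laplaceKeps σ h) atBot (nhds 0) := by
  have h1 : Tendsto (fun u : ℝ => u * Real.exp (-u ^ 2 / 2)) atBot (nhds 0) := by
    have h := (tendsto_rpow_abs_mul_exp_neg_mul_sq_cocompact (a := 1 / 2) (by norm_num) 1).mono_left
      atBot_le_cocompact
    rw [tendsto_zero_iff_abs_tendsto_zero]
    refine h.congr fun u => ?_
    simp only [Function.comp, abs_mul, Real.rpow_one, Real.abs_exp]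
    congr 2
    ring
  have h2 := tendsto_stdNormalCDF_atBot.add
    (h1.const_mul ((Real.sqrt (2 * Real.pi))⁻¹ * (σ ^ 2 / h ^ 2)))
  rw [mul_zero, add_zero] at h2
  refine h2.congr fun u => ?_
  simp only [laplaceKeps]
  ring

lemma integrable_laplaceKepsDens (σ h : ℝ) : Integrable (laplaceKepsDens σ h) := by
  have h1 : Integrable (fun u : ℝ => u ^ 2 * Real.exp (-u ^ 2 / 2)) := by
    have h := integrable_rpow_mul_exp_neg_mul_sq (b := 1 / 2) (by norm_num) (s := 2) (by norm_num)
    refine h.congr (Eventually.of_forall fun t => ?_)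
    simp only [Real.rpow_two]
    congr 2
    ring
  have h2 := (integrable_exp_neg_sq_half.const_mul
      ((Real.sqrt (2 * Real.pi))⁻¹ * (1 + σ ^ 2 / h ^ 2))).sub
    (h1.const_mul ((Real.sqrt (2 * Real.pi))⁻¹ * (σ ^ 2 / h ^ 2)))
  refine h2.congr (Eventually.of_forall fun t => ?_)
  simp only [laplaceKepsDens, Pi.sub_apply]
  ring

lemma exists_bound_laplaceKeps (σ h : ℝ) : ∃ C, ∀ u, ‖laplaceKeps σ h u‖ ≤ C := by
  refine ⟨(Real.sqrt (2 * Real.pi))⁻¹ * (∫ t : ℝ, Real.exp (-t ^ 2 / 2)) +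
    (Real.sqrt (2 * Real.pi))⁻¹ * (σ ^ 2 / h ^ 2), fun u => ?_⟩
  unfold laplaceKeps stdNormalCDF
  refine (norm_add_le _ _).trans (add_le_add ?_ ?_)
  · rw [norm_mul, Real.norm_of_nonneg (by positivity), Real.norm_of_nonneg
      (integral_nonneg fun t => (Real.exp_pos _).le)]
    refine mul_le_mul_of_nonneg_left ?_ (by positivity)
    exact setIntegral_le_integral integrable_exp_neg_sq_half
      (Eventually.of_forall fun t => (Real.exp_pos _).le)
  · rw [mul_assoc, norm_mul, Real.norm_of_nonneg (by positivity)]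
    refine mul_le_of_le_one_right (by positivity) ?_
    rw [norm_mul, Real.norm_eq_abs, Real.norm_eq_abs, Real.abs_exp, neg_div, Real.exp_neg,
      ← div_eq_mul_inv, div_le_one (Real.exp_pos _)]
    -- `|u| ≤ 1 + u²/2 ≤ exp (u²/2)`
    have := Real.add_one_le_exp (u ^ 2 / 2)
    nlinarith [sq_nonneg (|u| - 1), sq_abs u]

lemma laplaceKepsDens_neg (σ h u : ℝ) : laplaceKepsDens σ h (-u) = laplaceKepsDens σ h u := by
  simp [laplaceKepsDens]

lemma integrable_laplaceKepsDens_mul (σ h : ℝ) :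
    Integrable (fun z => 2 * (laplaceKepsDens σ h z * laplaceKeps σ h (-z))) := by
  obtain ⟨C, hC⟩ := exists_bound_laplaceKeps σ h
  have hc : Continuous (laplaceKeps σ h) :=
    continuous_iff_continuousAt.2 fun u => (hasDerivAt_laplaceKeps σ h u).continuousAt
  exact ((integrable_laplaceKepsDens σ h).mul_bdd (c := C)
    (hc.comp continuous_neg).aestronglyMeasurable
    (Eventually.of_forall fun z => hC (-z))).const_mul 2

lemma sq_laplaceKeps_neg_eq_integral (σ h a : ℝ) :
    (laplaceKeps σ h (-a)) ^ 2
      = ∫ z in Set.Ioi a, 2 * (laplaceKepsDens σ h z * laplaceKeps σ h (-z)) := by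
  have hd : ∀ z ∈ Set.Ici a, HasDerivAt (fun z => -(laplaceKeps σ h (-z)) ^ 2)
      (2 * (laplaceKepsDens σ h z * laplaceKeps σ h (-z))) z := by
    intro z _
    have h1 := (((hasDerivAt_laplaceKeps σ h (-z)).comp z (hasDerivAt_neg z)).pow 2).neg
    refine HasDerivAt.congr_deriv h1 ?_
    simp only [laplaceKepsDens_neg, Function.comp]
    push_cast
    ring
  have ht : Tendsto (fun z => -(laplaceKeps σ h (-z)) ^ 2) atTop (nhds 0) := by
    have := (((tendsto_laplaceKeps_atBot σ h).comp tendsto_neg_atTop_atBot).pow 2).neg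
    simpa using this
  rw [integral_Ioi_of_hasDerivAt_of_tendsto' hd
    (integrable_laplaceKepsDens_mul σ h).integrableOn ht]
  ring

/-- Integration-by-parts identity for the second moment of the integrated
Laplace deconvoluting kernel. -/
theorem stmt7 (σ h x : ℝ) (hσ : 0 < σ) (hh : 0 < h)
    (fY FY : ℝ → ℝ)
    (hfYpos : ∀ y, 0 ≤ fY y) (hfYint : MeasureTheory.Integrable fY)
    (hfYtotal : (∫ y : ℝ, fY y) = 1)
    (hfYbdd : ∃ C, ∀ y, |fY y| ≤ C)
    (hFY : ∀ y, FY y = ∫ t in Set.Iio y, fY t) :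
    (∫ y : ℝ, (laplaceKeps σ h ((x - y) / h)) ^ 2 * fY y)
      = 2 * ∫ z : ℝ, laplaceKepsDens σ h z * laplaceKeps σ h (-z) * FY (x + z * h) := by
  set g : ℝ → ℝ := fun z => 2 * (laplaceKepsDens σ h z * laplaceKeps σ h (-z)) with hg
  let S : Set (ℝ × ℝ) := {p | p.1 < x + p.2 * h}
  let G : ℝ × ℝ → ℝ := S.indicator fun p => fY p.1 * g p.2
  have hS : MeasurableSet S := measurableSet_lt (by fun_prop) (by fun_prop)
  have hG : Integrable G (volume.prod volume) :=
    (hfYint.mul_prod (integrable_laplaceKepsDens_mul σ h)).indicator hS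
  have hL : ∀ y, (laplaceKeps σ h ((x - y) / h)) ^ 2 * fY y = ∫ z, G (y, z) := by
    intro y
    have e : (x - y) / h = -((y - x) / h) := by ring
    rw [e, sq_laplaceKeps_neg_eq_integral, mul_comm, ← integral_const_mul,
      ← integral_indicator measurableSet_Ioi]
    congr 1
    ext z
    have : z ∈ Set.Ioi ((y - x) / h) ↔ (y, z) ∈ S := by
      simp only [Set.mem_Ioi, S, Set.mem_ofPred_eq, div_lt_iff₀ hh, sub_lt_iff_lt_add']
    by_cases hz : (y, z) ∈ S
    · simp only [G, Set.indicator_of_mem hz, Set.indicator_of_mem (this.2 hz), hg]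
    · simp only [G, Set.indicator_of_notMem hz, Set.indicator_of_notMem (mt this.1 hz)]
  have hR : ∀ z, 2 * (laplaceKepsDens σ h z * laplaceKeps σ h (-z) * FY (x + z * h))
      = ∫ y, G (y, z) := by
    intro z
    rw [hFY, ← mul_assoc, mul_comm, ← integral_mul_const, ← integral_indicator measurableSet_Iio]
    rfl
  rw [← integral_const_mul]
  simp_rw [hL, hR]
  exact integral_integral_swap (f := fun y z => G (y, z)) hG
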